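/- arXiv:math/0206138 — 3 statements merged into one kernel-verified Lean document; each statement's English description precedes it below -/
import Mathlib

section
/- Let G be a set with a binary operation · satisfying left cancellation (for all a, b, c in G, a·b = a·c implies b = c). If G satisfies the identities (y·z)·(x·x) = (y·x)·(z·x) and (x·(x·x))·(u·v) = (x·u)·((x·x)·v) for all elements, then G also satisfies the identity (x·x)·(y·z) = (x·y)·(x·z) for all elements. -/
/-!
Multiply both sides of the claim on the left by `x * (x * z)`. By the identity with `x * (x * x)`,
the product `(x * u) * ((x * x) * v)` depends only on `x` and `u * v`, so the rearrangement
`(x * z) * (y * z) = (x * y) * (z * z)` given by right semimediality may be performed on `u * v`.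
Right semimediality, used twice more, then reaches the right-hand side, and the factor cancels.
-/

/-- The right semimedial law: the medial law `(a * b) * (c * d) = (a * c) * (b * d)` restricted to
`c = d`. The repeated element is the first variable. -/
def IsRightSemimedial (G : Type*) [Mul G] : Prop :=
  ∀ x y z : G, (y * z) * (x * x) = (y * x) * (z * x)

namespace IsRightSemimedial

variable {G : Type*} [Mul G]

theorem mul_mul_mul_self_mul_self (h : IsRightSemimedial G) (a b c d : G) :
    (a * b) * ((c * c) * (d * d)) = (a * (c * d)) * (b * (c * d)) := by
  rw [h d c c, h (c * d) a b]

theorem inner_mul_mul_mul_comm (h : IsRightSemimedial G) {x : G}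
    (hx : ∀ u v : G, (x * (x * x)) * (u * v) = (x * u) * ((x * x) * v)) (a b c : G) :
    (x * (a * c)) * ((x * x) * (b * c)) = (x * (a * b)) * ((x * x) * (c * c)) :=
  calc (x * (a * c)) * ((x * x) * (b * c))
      = (x * (x * x)) * ((a * c) * (b * c)) := (hx (a * c) (b * c)).symm
    _ = (x * (x * x)) * ((a * b) * (c * c)) := by rw [h c a b]
    _ = (x * (a * b)) * ((x * x) * (c * c)) := hx (a * b) (c * c)

end IsRightSemimedial

theorem stmt_0 {G : Type*} [Mul G]
    (hcancel : ∀ a b c : G, a * b = a * c → b = c)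
    (h2 : ∀ x y z : G, (y * z) * (x * x) = (y * x) * (z * x))
    (h3 : ∀ x u v : G, (x * (x * x)) * (u * v) = (x * u) * ((x * x) * v)) :
    ∀ x y z : G, (x * x) * (y * z) = (x * y) * (x * z) := by
  intro x y z
  have hG : IsRightSemimedial G := h2
  apply hcancel (x * (x * z))
  calc (x * (x * z)) * ((x * x) * (y * z))
      = (x * (x * y)) * ((x * x) * (z * z)) := hG.inner_mul_mul_mul_comm (h3 x) x y z
    _ = (x * (x * z)) * ((x * y) * (x * z)) := hG.mul_mul_mul_self_mul_self x (x * y) x z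
end

section
/- Let G be a set with a binary operation · satisfying the identities (y·z)·(x·x) = (y·x)·(z·x) and (x·(x·x))·(u·v) = (x·u)·((x·x)·v) for all elements. Then for all x, y, z in G one has (x·(x·z))·((x·x)·(y·z)) = (x·(x·z))·((x·y)·(x·z)). -/
/-!
The second identity makes the left translations by `x * (x * x)`, `x` and `x * x` a homotopism
`a * (u * v) = (b * u) * (c * v)`. Reading a homotopism backwards collects both factors under `a`,
where the right semimedial law exchanges the first `z` with `y`; reading it forwards then gives
`(b * (w * z)) * (c * (y * z)) = (b * (w * y)) * (c * (z * z))`. When `c = x * x`, the right factor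
is the square of `x * z`, and the right semimedial law distributes it over the left factor.
-/

/-- The right semimedial law: right multiplication by the square `x * x` distributes over a product
as multiplication of each factor by `x`. -/
def RightSemimedial (G : Type*) [Mul G] : Prop :=
  ∀ x y z : G, (y * z) * (x * x) = (y * x) * (z * x)

namespace RightSemimedial

variable {G : Type*} [Mul G]

theorem mul_mul_mul_self_mul_mul_self (hG : RightSemimedial G) (p q x z : G) :
    (p * q) * ((x * x) * (z * z)) = (p * (x * z)) * (q * (x * z)) := by
  rw [hG z x x, hG (x * z) p q]

theorem mul_mul_mul_mul_swap_of_homotopism (hG : RightSemimedial G) {a b c : G}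
    (h : ∀ u v, a * (u * v) = (b * u) * (c * v)) (w y z : G) :
    (b * (w * z)) * (c * (y * z)) = (b * (w * y)) * (c * (z * z)) :=
  calc (b * (w * z)) * (c * (y * z))
      = a * ((w * z) * (y * z)) := (h _ _).symm
    _ = a * ((w * y) * (z * z)) := by rw [hG z w y]
    _ = (b * (w * y)) * (c * (z * z)) := h _ _

end RightSemimedial

theorem stmt_1_general {G : Type*} [Mul G] (hG : RightSemimedial G) {a b x : G}
    (h : ∀ u v, a * (u * v) = (b * u) * ((x * x) * v)) (w y z : G) :
    (b * (w * z)) * ((x * x) * (y * z)) = (b * (x * z)) * ((w * y) * (x * z)) :=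
  calc (b * (w * z)) * ((x * x) * (y * z))
      = (b * (w * y)) * ((x * x) * (z * z)) := hG.mul_mul_mul_mul_swap_of_homotopism h w y z
    _ = (b * (x * z)) * ((w * y) * (x * z)) := hG.mul_mul_mul_self_mul_mul_self b (w * y) x z

theorem stmt_1 {G : Type*} [Mul G]
    (h2 : ∀ x y z : G, (y * z) * (x * x) = (y * x) * (z * x))
    (h3 : ∀ x u v : G, (x * (x * x)) * (u * v) = (x * u) * ((x * x) * v)) :
    ∀ x y z : G, (x * (x * z)) * ((x * x) * (y * z)) = (x * (x * z)) * ((x * y) * (x * z)) :=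
  fun x y z => stmt_1_general h2 (h3 x) x y z
end

section
/- A quasigroup Q is trimedial if and only if it satisfies the single identity ((x·y)·(u·u))·((w·(w·w))·(z·v)) = ((x·u)·(y·u))·((w·z)·((w·w)·v)) for all elements x, y, z, u, v, w of Q. -/
/-!
At `y = u` the left factors of the identity agree, so cancellation splits it into the right
semimedial law and Kepka's law, which say that `(R u, R u)` and `(L w, L (w * w))` extend to
autotopisms (`L` and `R` are the translations).

Composing such autotopisms isolates autotopisms with a trivial first component. They show that
`(L w, L w)` extends to an autotopism, which is the left semimedial law, and that
`(R (w * w), R w)` does, which is the mirror image of Kepka's law. So the hypotheses are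
self-dual.

By left semimediality, `(w * x) * (y * z) = (w * y) * (x * z)` holds iff `z` is fixed by the
commutator of the displacements `(L x)⁻¹ * L w` and `(L y)⁻¹ * L w`. A displacement is
multiplicative up to a permutation that commutes with all displacements, so the commutator is an
automorphism and the solutions `z` form a subquasigroup. It contains `w`, `x` and `y`, which makes
the relation invariant under exchanging `w` and `x`; by duality it is then invariant under all
permutations of its arguments. As it holds whenever two arguments agree, it holds on `{a, b, c}`
and, being closed under products in each argument, on the generated subgroupoid.
-/

/-- A quasigroup structure on a type: a binary operation whose left and right
translations are bijections. -/
def IsQuasigroup (Q : Type*) [Mul Q] : Prop :=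
  (∀ a : Q, Function.Bijective fun x : Q => a * x) ∧
  (∀ a : Q, Function.Bijective fun x : Q => x * a)

/-- A quasigroup is trimedial if every subgroupoid generated by three elements is
medial, i.e. satisfies (w·x)·(y·z) = (w·y)·(x·z). -/
def IsTrimedial (Q : Type*) [Mul Q] : Prop :=
  ∀ a b c : Q, ∀ w x y z : Q,
    w ∈ Subsemigroup.closure {a, b, c} → x ∈ Subsemigroup.closure {a, b, c} →
    y ∈ Subsemigroup.closure {a, b, c} → z ∈ Subsemigroup.closure {a, b, c} →
    (w * x) * (y * z) = (w * y) * (x * z)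

open Equiv
open scoped commutatorElement

/-- The relation `(w * x) * (y * z) = (w * y) * (x * z)`. The left and right semimedial laws are
`MedialAt w w x y` and `MedialAt x y u u`, and `MedialAt w (w * w) z v` is Kepka's law. -/
def MedialAt {Q : Type*} [Mul Q] (w x y z : Q) : Prop :=
  (w * x) * (y * z) = (w * y) * (x * z)

lemma MedialAt.swap_middle {Q : Type*} [Mul Q] {w x y z : Q} (h : MedialAt w x y z) :
    MedialAt w y x z :=
  Eq.symm h

/-- The group of autotopisms of `Q`, the triples of permutations with `α x * β y = γ (x * y)`. Only
the pair `(α, β)` is recorded, since it determines `γ` as soon as multiplication is surjective. -/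
def autotopismGroup (Q : Type*) [Mul Q] : Subgroup (Perm Q × Perm Q) where
  carrier := {p | ∃ γ : Perm Q, ∀ x y, p.1 x * p.2 y = γ (x * y)}
  mul_mem' := by
    rintro p q ⟨γ, hγ⟩ ⟨δ, hδ⟩
    exact ⟨γ * δ, fun x y => by simp [hγ, hδ]⟩
  one_mem' := ⟨1, fun _ _ => rfl⟩
  inv_mem' := by
    rintro p ⟨γ, hγ⟩
    exact ⟨γ⁻¹, fun x y => by rw [Perm.eq_inv_iff_eq, ← hγ]; simp⟩

lemma commutator_apply_mul {Q : Type*} [Mul Q] {α β m n : Perm Q}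
    (hα : ∀ a b, α a * α b = α (m (a * b))) (hβ : ∀ a b, β a * β b = β (n (a * b)))
    (hmβ : Commute m β) (hnα : Commute n α) (hmn : Commute m n) (a b : Q) :
    ⁅α, β⁆ (a * b) = ⁅α, β⁆ a * ⁅α, β⁆ b := by
  have apply_swap (c : Q) : ⁅α, β⁆ (β (α c)) = α (β c) := by simp [commutatorElement_def]
  obtain ⟨a, rfl⟩ := (β * α).surjective a
  obtain ⟨b, rfl⟩ := (β * α).surjective b
  have swap_β (c : Q) : m (β c) = β (m c) := Perm.ext_iff.1 hmβ.eq c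
  have swap_α (c : Q) : n (α c) = α (n c) := Perm.ext_iff.1 hnα.eq c
  have swap_n (c : Q) : m (n c) = n (m c) := Perm.ext_iff.1 hmn.eq c
  simp only [Perm.mul_apply, hα, hβ, apply_swap, swap_α, swap_β, swap_n]

namespace IsQuasigroup

variable {Q : Type*} [Mul Q] (hQ : IsQuasigroup Q)

/-- The left translation `x ↦ a * x` of a quasigroup, as a permutation. -/
noncomputable def mulLeft (a : Q) : Perm Q := Equiv.ofBijective _ (hQ.1 a)

/-- The right translation `x ↦ x * a` of a quasigroup, as a permutation. -/
noncomputable def mulRight (a : Q) : Perm Q := Equiv.ofBijective _ (hQ.2 a)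

@[simp] lemma mulLeft_apply (a x : Q) : hQ.mulLeft a x = a * x := rfl

@[simp] lemma mulRight_apply (a x : Q) : hQ.mulRight a x = x * a := rfl

@[simp] lemma mul_mulLeft_symm_apply (a x : Q) : a * (hQ.mulLeft a).symm x = x :=
  (hQ.mulLeft a).apply_symm_apply x

@[simp] lemma mulLeft_symm_mul_apply (a x : Q) : (hQ.mulLeft a).symm (a * x) = x :=
  (hQ.mulLeft a).symm_apply_apply x

include hQ in
lemma mul_left_cancel_iff {a x y : Q} : a * x = a * y ↔ x = y := (hQ.1 a).injective.eq_iff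

include hQ in
lemma mul_right_cancel_iff {a x y : Q} : x * a = y * a ↔ x = y := (hQ.2 a).injective.eq_iff

include hQ in
lemma op : IsQuasigroup Qᵐᵒᵖ :=
  ⟨fun a => (MulOpposite.opEquiv.bijective.comp (hQ.2 a.unop)).comp
      MulOpposite.opEquiv.symm.bijective,
    fun a => (MulOpposite.opEquiv.bijective.comp (hQ.1 a.unop)).comp
      MulOpposite.opEquiv.symm.bijective⟩

lemma mulLeft_mul_mulLeft {w x y : Q} (h : ∀ z, MedialAt w x y z) :
    hQ.mulLeft (w * x) * hQ.mulLeft y = hQ.mulLeft (w * y) * hQ.mulLeft x :=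
  Equiv.ext h

lemma mulRight_mul_mulLeft {w u v : Q} (h : ∀ y, MedialAt w y u v) :
    hQ.mulRight (u * v) * hQ.mulLeft w = hQ.mulLeft (w * u) * hQ.mulRight v :=
  Equiv.ext h

lemma mulLeft_mem_autotopismGroup_iff {w x : Q} :
    (hQ.mulLeft w, hQ.mulLeft x) ∈ autotopismGroup Q ↔ ∀ y z, MedialAt w x y z := by
  refine ⟨fun ⟨γ, hγ⟩ y z => ?_, fun h => ⟨hQ.mulLeft (w * x), fun y z => (h y z).symm⟩⟩
  have γ_eq (t : Q) : (w * x) * t = γ t := by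
    obtain ⟨t, rfl⟩ := (hQ.1 x).surjective t
    exact hγ x t
  exact (γ_eq _).trans (hγ y z).symm

lemma mulRight_mem_autotopismGroup_iff {y z : Q} :
    (hQ.mulRight y, hQ.mulRight z) ∈ autotopismGroup Q ↔ ∀ w x, MedialAt w x y z := by
  refine ⟨fun ⟨γ, hγ⟩ w x => ?_, fun h => ⟨hQ.mulRight (y * z), fun w x => (h w x).symm⟩⟩
  have γ_eq (t : Q) : t * (y * z) = γ t := by
    obtain ⟨t, rfl⟩ := (hQ.2 y).surjective t
    exact hγ t y
  exact (γ_eq _).trans (hγ w x).symm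

lemma mulRight_apply_eq_conj_mul {n : Perm Q} (hn : (1, n) ∈ autotopismGroup Q) (x y : Q) :
    hQ.mulRight (n y) = hQ.mulLeft x * n * (hQ.mulLeft x)⁻¹ * hQ.mulRight y := by
  obtain ⟨γ, hγ⟩ := hn
  simp only [Perm.one_apply] at hγ
  ext t
  simp [hγ]

/-- The displacement from `w` to `x`, mapping `z` to the solution `p` of `w * p = x * z`. In a left
semimedial quasigroup, mediality at given elements amounts to a fixed point of a commutator of
displacements. -/
noncomputable def displacement (w x : Q) : Perm Q := (hQ.mulLeft w)⁻¹ * hQ.mulLeft x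

lemma mul_displacement_apply (w x z : Q) : w * hQ.displacement w x z = x * z := by
  simp [displacement]

lemma displacement_inv (w x : Q) : (hQ.displacement w x)⁻¹ = hQ.displacement x w := by
  simp [displacement]

lemma displacement_mul_displacement (w x y : Q) :
    hQ.displacement w x * hQ.displacement x y = hQ.displacement w y := by
  simp [displacement, mul_assoc]

lemma commute_displacement {n : Perm Q} (hn : (1, n) ∈ autotopismGroup Q) (x y : Q) :
    Commute n (hQ.displacement x y) := by
  obtain ⟨γ, hγ⟩ := hn
  simp only [Perm.one_apply] at hγ
  ext t
  simp [← hQ.mul_left_cancel_iff (a := x), hγ, mul_displacement_apply]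

section Kepka

variable (kepka : ∀ w z v : Q, MedialAt w (w * w) z v)
include kepka

lemma displacement_mul_left (w x y : Q) :
    hQ.displacement (w * x) (w * y) =
      hQ.mulLeft (w * w) * hQ.displacement x y * (hQ.mulLeft (w * w))⁻¹ := by
  have mulLeft_mul (z : Q) : hQ.mulLeft (w * z) =
      hQ.mulLeft (w * (w * w)) * hQ.mulLeft z * (hQ.mulLeft (w * w))⁻¹ := by
    rw [eq_mul_inv_iff_mul_eq, hQ.mulLeft_mul_mulLeft (kepka w z)]
  rw [displacement, mulLeft_mul x, mulLeft_mul y, displacement]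
  group

include hQ in
theorem medialAt_self_self (right : ∀ x y u : Q, MedialAt x y u u) (w x y : Q) :
    MedialAt w w x y := by
  have kepka_mem (v : Q) : (hQ.mulLeft v, hQ.mulLeft (v * v)) ∈ autotopismGroup Q :=
    hQ.mulLeft_mem_autotopismGroup_iff.2 (kepka v)
  have right_mem (u : Q) : (hQ.mulRight u, hQ.mulRight u) ∈ autotopismGroup Q :=
    hQ.mulRight_mem_autotopismGroup_iff.2 fun x y => right x y u
  have translate_mem :
      (hQ.mulLeft (w * w), hQ.mulLeft (w * w * w)) ∈ autotopismGroup Q := by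
    have conj_mem := mul_mem (mul_mem (right_mem (w * w)) (kepka_mem w)) (inv_mem (right_mem w))
    simpa [hQ.mulRight_mul_mulLeft fun y => right _ y w] using conj_mem
  have conj_displacement_mem :
      (1, hQ.displacement (w * w * w) (w * w * (w * w))) ∈ autotopismGroup Q := by
    simpa [displacement] using mul_mem (inv_mem translate_mem) (kepka_mem (w * w))
  have displacement_mem : (1, hQ.displacement w (w * w)) ∈ autotopismGroup Q := by
    rw [hQ.displacement_mul_left kepka] at conj_displacement_mem
    have conj_mem := mul_mem (mul_mem (inv_mem (kepka_mem (w * w))) conj_displacement_mem)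
      (kepka_mem (w * w))
    simpa [mul_assoc] using conj_mem
  refine hQ.mulLeft_mem_autotopismGroup_iff.1 ?_ x y
  simpa [displacement] using mul_mem (kepka_mem w) (inv_mem displacement_mem)

variable (left : ∀ w x y : Q, MedialAt w w x y)
include left

lemma displacement_sq_mem_autotopismGroup (w : Q) :
    (1, hQ.displacement w (w * w)) ∈ autotopismGroup Q := by
  simpa [displacement] using
    mul_mem (inv_mem (hQ.mulLeft_mem_autotopismGroup_iff.2 (left w)))
      (hQ.mulLeft_mem_autotopismGroup_iff.2 (kepka w))

include hQ in
theorem medialAt_sq_self (right : ∀ x y u : Q, MedialAt x y u u) (y z w : Q) :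
    MedialAt y z (w * w) w := by
  have left_mem (u : Q) : (hQ.mulLeft u, hQ.mulLeft u) ∈ autotopismGroup Q :=
    hQ.mulLeft_mem_autotopismGroup_iff.2 (left u)
  have right_mem : (hQ.mulRight w, hQ.mulRight w) ∈ autotopismGroup Q :=
    hQ.mulRight_mem_autotopismGroup_iff.2 fun x y => right x y w
  set m := hQ.mulLeft (w * w) * (hQ.mulLeft w)⁻¹ with hm
  have one_m_mem : (1, m) ∈ autotopismGroup Q := by
    simpa [hm] using
      mul_mem (hQ.mulLeft_mem_autotopismGroup_iff.2 (kepka w)) (inv_mem (left_mem w))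
  have m_one_mem : (m, 1) ∈ autotopismGroup Q := by
    have m_m_mem : (m, m) ∈ autotopismGroup Q := by
      simpa [hm] using mul_mem (left_mem (w * w)) (inv_mem (left_mem w))
    simpa using mul_mem m_m_mem (inv_mem one_m_mem)
  set n := (hQ.mulRight w)⁻¹ * m * hQ.mulRight w with hn
  have one_n_mem : (1, n) ∈ autotopismGroup Q := by
    simpa [hn] using mul_mem (mul_mem (inv_mem right_mem) one_m_mem) right_mem
  have n_one_mem : (n, 1) ∈ autotopismGroup Q := by
    simpa [hn] using mul_mem (mul_mem (inv_mem right_mem) m_one_mem) right_mem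
  have n_apply : n w = w * w := by
    simp [hn, hm, Equiv.symm_apply_eq]
  refine hQ.mulRight_mem_autotopismGroup_iff.1 ?_ y z
  rw [← n_apply, hQ.mulRight_apply_eq_conj_mul one_n_mem w]
  simpa using
    mul_mem (mul_mem (mul_mem (left_mem w) n_one_mem) (inv_mem (left_mem w))) right_mem

end Kepka

section LeftSemimedial

variable (left : ∀ w x y : Q, MedialAt w w x y)
include left

lemma displacement_apply_mul_displacement_apply (w x a b : Q) :
    hQ.displacement w x a * hQ.displacement w x b =
      hQ.displacement (w * w) (x * x) (a * b) := by
  rw [← hQ.mul_left_cancel_iff (a := w * w), left, mul_displacement_apply, mul_displacement_apply,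
    mul_displacement_apply, left]

lemma medialAt_iff_commutator_apply_eq {w x y z : Q} :
    MedialAt w x y z ↔ ⁅hQ.displacement x w, hQ.displacement y w⁆ z = z := by
  have mulLeft_mul (v : Q) : hQ.mulLeft (w * v) =
      hQ.mulLeft (w * w) * hQ.mulLeft v * (hQ.mulLeft w)⁻¹ := by
    rw [eq_mul_inv_iff_mul_eq, hQ.mulLeft_mul_mulLeft (left w v)]
  have commutator_eq : ⁅hQ.displacement x w, hQ.displacement y w⁆ =
      (hQ.displacement w y * hQ.displacement w x)⁻¹ *
        (hQ.displacement w x * hQ.displacement w y) := by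
    rw [← hQ.displacement_inv w x, ← hQ.displacement_inv w y, commutatorElement_def]
    group
  change hQ.mulLeft (w * x) (hQ.mulLeft y z) = hQ.mulLeft (w * y) (hQ.mulLeft x z) ↔ _
  rw [mulLeft_mul x, mulLeft_mul y, commutator_eq, Perm.mul_apply _ _ z, Perm.inv_eq_iff_eq]
  simp only [displacement, Perm.mul_apply, EmbeddingLike.apply_eq_iff_eq]

lemma medialAt_swap_left_iff {w x y z : Q} :
    MedialAt x w y z ↔ MedialAt w x y (hQ.displacement x w z) := by
  have commutator_eq : ⁅hQ.displacement w x, hQ.displacement y x⁆ =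
      ((hQ.displacement x w)⁻¹ * ⁅hQ.displacement x w, hQ.displacement y w⁆ *
        hQ.displacement x w)⁻¹ := by
    rw [← hQ.displacement_mul_displacement y w x, ← hQ.displacement_inv x w]
    simp only [commutatorElement_def]
    group
  rw [hQ.medialAt_iff_commutator_apply_eq left, hQ.medialAt_iff_commutator_apply_eq left,
    commutator_eq, Perm.inv_eq_iff_eq, Perm.mul_apply, Perm.mul_apply, Perm.eq_inv_iff_eq]
  exact eq_comm

variable (kepka : ∀ w z v : Q, MedialAt w (w * w) z v)
include kepka

lemma displacement_sq_sq (w x : Q) :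
    hQ.displacement (w * w) (x * x) =
      hQ.displacement w x * ((hQ.displacement w (w * w))⁻¹ * hQ.displacement x (x * x)) := by
  have commute := hQ.commute_displacement (hQ.displacement_sq_mem_autotopismGroup kepka left w) w x
  rw [← mul_assoc, ← commute.inv_left.eq, hQ.displacement_inv, mul_assoc,
    hQ.displacement_mul_displacement, hQ.displacement_mul_displacement]

lemma commutator_displacement_apply_mul (w x y a b : Q) :
    ⁅hQ.displacement x w, hQ.displacement y w⁆ (a * b) =
      ⁅hQ.displacement x w, hQ.displacement y w⁆ a *
        ⁅hQ.displacement x w, hQ.displacement y w⁆ b := by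
  have apply_mul (u v a b : Q) : hQ.displacement u v a * hQ.displacement u v b =
      hQ.displacement u v
        (((hQ.displacement u (u * u))⁻¹ * hQ.displacement v (v * v)) (a * b)) := by
    rw [hQ.displacement_apply_mul_displacement_apply left, hQ.displacement_sq_sq left kepka,
      Perm.mul_apply]
  have correction_mem (u v : Q) :
      (1, (hQ.displacement u (u * u))⁻¹ * hQ.displacement v (v * v)) ∈ autotopismGroup Q := by
    simpa using mul_mem (inv_mem (hQ.displacement_sq_mem_autotopismGroup kepka left u))
      (hQ.displacement_sq_mem_autotopismGroup kepka left v)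
  have commute (u v : Q) := hQ.commute_displacement (correction_mem u v)
  exact commutator_apply_mul (apply_mul x w) (apply_mul y w) (commute x w y w) (commute y w x w)
    ((commute x w _ _).inv_right.mul_right (commute x w _ _)) a b

include hQ in
lemma medialAt_mul_cancel_left {w x y a b : Q} (ha : MedialAt w x y a) :
    MedialAt w x y (a * b) ↔ MedialAt w x y b := by
  rw [hQ.medialAt_iff_commutator_apply_eq left] at ha ⊢
  rw [hQ.medialAt_iff_commutator_apply_eq left,
    hQ.commutator_displacement_apply_mul left kepka, ha, hQ.mul_left_cancel_iff]

include hQ in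
lemma medialAt_mul_cancel_right {w x y a b : Q} (hb : MedialAt w x y b) :
    MedialAt w x y (a * b) ↔ MedialAt w x y a := by
  rw [hQ.medialAt_iff_commutator_apply_eq left] at hb ⊢
  rw [hQ.medialAt_iff_commutator_apply_eq left,
    hQ.commutator_displacement_apply_mul left kepka, hb, hQ.mul_right_cancel_iff]

end LeftSemimedial

end IsQuasigroup

/-- Kepka's axioms for trimedial quasigroups: the two semimedial laws and Kepka's law. -/
structure IsKepkaQuasigroup (Q : Type*) [Mul Q] : Prop where
  isQuasigroup : IsQuasigroup Q
  left (w x y : Q) : MedialAt w w x y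
  right (x y u : Q) : MedialAt x y u u
  kepka (w z v : Q) : MedialAt w (w * w) z v

namespace IsKepkaQuasigroup

variable {Q : Type*} [Mul Q] (h : IsKepkaQuasigroup Q)
include h

lemma op : IsKepkaQuasigroup Qᵐᵒᵖ where
  isQuasigroup := h.isQuasigroup.op
  left _ _ _ := MulOpposite.unop_injective (h.right _ _ _)
  right _ _ _ := MulOpposite.unop_injective (h.left _ _ _)
  kepka _ _ _ := MulOpposite.unop_injective
    (h.isQuasigroup.medialAt_sq_self h.kepka h.left h.right _ _ _)

lemma medialAt_mul {w x y a b : Q} (ha : MedialAt w x y a) (hb : MedialAt w x y b) :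
    MedialAt w x y (a * b) :=
  (h.isQuasigroup.medialAt_mul_cancel_left h.left h.kepka ha).2 hb

lemma medialAt_of_mul {w x y a b : Q} (ha : MedialAt w x y a) (hab : MedialAt w x y (a * b)) :
    MedialAt w x y b :=
  (h.isQuasigroup.medialAt_mul_cancel_left h.left h.kepka ha).1 hab

lemma medialAt_second (w x y : Q) : MedialAt w x y x :=
  (h.right w y x).swap_middle

-- `MedialAt x w y y` says that `MedialAt w x y p` for the `p` with `x * p = w * y`.
lemma medialAt_first (w x y : Q) : MedialAt w x y w := by
  have at_quotient : MedialAt w x y (h.isQuasigroup.displacement x w y) :=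
    (h.isQuasigroup.medialAt_swap_left_iff h.left).1 (h.right x w y)
  have at_mul := h.medialAt_mul (h.medialAt_second w x y) at_quotient
  rw [h.isQuasigroup.mul_displacement_apply] at at_mul
  exact (h.isQuasigroup.medialAt_mul_cancel_right h.left h.kepka (h.right w x y)).1 at_mul

lemma swap_left {w x y z : Q} (hm : MedialAt w x y z) : MedialAt x w y z := by
  rw [h.isQuasigroup.medialAt_swap_left_iff h.left]
  refine h.medialAt_of_mul (h.medialAt_second w x y) ?_
  rw [h.isQuasigroup.mul_displacement_apply]
  exact h.medialAt_mul (h.medialAt_first w x y) hm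

lemma swap_right {w x y z : Q} (hm : MedialAt w x y z) : MedialAt w x z y :=
  have op_medialAt :
      MedialAt (MulOpposite.op z) (MulOpposite.op y) (MulOpposite.op x) (MulOpposite.op w) :=
    congrArg MulOpposite.op hm
  congrArg MulOpposite.unop (h.op.swap_left op_medialAt)

lemma rotate {w x y z : Q} (hm : MedialAt w x y z) : MedialAt z w x y :=
  h.swap_left (h.swap_right hm).swap_middle

lemma medialAt_of_mem_triple {a b c w x y z : Q} (hw : w ∈ ({a, b, c} : Set Q))
    (hx : x ∈ ({a, b, c} : Set Q)) (hy : y ∈ ({a, b, c} : Set Q))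
    (hz : z ∈ ({a, b, c} : Set Q)) : MedialAt w x y z := by
  have two_agree : w = x ∨ w = y ∨ w = z ∨ x = y ∨ x = z ∨ y = z := by
    simp only [Set.mem_insert_iff, Set.mem_singleton_iff] at hw hx hy hz
    grind
  rcases two_agree with rfl | rfl | rfl | rfl | rfl | rfl
  · exact h.left _ _ _
  · exact (h.left _ _ _).swap_middle
  · exact h.medialAt_first _ _ _
  · exact rfl
  · exact h.medialAt_second _ _ _
  · exact h.right _ _ _

lemma medialAt_closure_rotate {A B C s : Set Q}
    (hs : ∀ w ∈ A, ∀ x ∈ B, ∀ y ∈ C, ∀ z ∈ s, MedialAt w x y z) :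
    ∀ z ∈ Subsemigroup.closure s, ∀ w ∈ A, ∀ x ∈ B, ∀ y ∈ C, MedialAt z w x y := by
  intro z hz w hw x hx y hy
  refine h.rotate ?_
  induction hz using Subsemigroup.closure_induction with
  | mem g hg => exact hs w hw x hx y hy g hg
  | mul a b _ _ ha hb => exact h.medialAt_mul ha hb

theorem isTrimedial : IsTrimedial Q := by
  intro a b c w x y z hw hx hy hz
  have on_generators : ∀ w ∈ ({a, b, c} : Set Q), ∀ x ∈ ({a, b, c} : Set Q),
      ∀ y ∈ ({a, b, c} : Set Q), ∀ z ∈ ({a, b, c} : Set Q), MedialAt w x y z :=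
    fun _ hw _ hx _ hy _ hz => h.medialAt_of_mem_triple hw hx hy hz
  -- Each rotation enlarges the last set to its closure and brings it to the front.
  exact h.medialAt_closure_rotate (h.medialAt_closure_rotate (h.medialAt_closure_rotate
    (h.medialAt_closure_rotate on_generators))) w hw x hx y hy z hz

end IsKepkaQuasigroup

lemma IsTrimedial.medialAt_right {Q : Type*} [Mul Q] (h : IsTrimedial Q) (x y u : Q) :
    MedialAt x y u u := by
  apply h x y u <;> exact Subsemigroup.subset_closure (by simp)

lemma IsTrimedial.medialAt_kepka {Q : Type*} [Mul Q] (h : IsTrimedial Q) (w z v : Q) :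
    MedialAt w (w * w) z v := by
  have hw : w ∈ Subsemigroup.closure {w, z, v} := Subsemigroup.subset_closure (by simp)
  exact h w z v _ _ _ _ hw (mul_mem hw hw) (Subsemigroup.subset_closure (by simp))
    (Subsemigroup.subset_closure (by simp))

lemma IsQuasigroup.trimedial_identity_iff {Q : Type*} [Mul Q] (hQ : IsQuasigroup Q) :
    (∀ x y z u v w : Q,
        ((x * y) * (u * u)) * ((w * (w * w)) * (z * v)) =
          ((x * u) * (y * u)) * ((w * z) * ((w * w) * v))) ↔
      (∀ x y u : Q, MedialAt x y u u) ∧ ∀ w z v : Q, MedialAt w (w * w) z v := by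
  refine ⟨fun h => ?_, fun ⟨right, kepka⟩ x y z u v w => congrArg₂ _ (right x y u) (kepka w z v)⟩
  have kepka (w z v : Q) : MedialAt w (w * w) z v := hQ.mul_left_cancel_iff.1 (h w w z w v w)
  refine ⟨fun x y u => hQ.mul_right_cancel_iff.1 ((h x y u u u u).trans ?_), kepka⟩
  exact congrArg _ (kepka u u u).symm

theorem stmt_4 {Q : Type*} [Mul Q] (hQ : IsQuasigroup Q) :
    IsTrimedial Q ↔
      ∀ x y z u v w : Q,
        ((x * y) * (u * u)) * ((w * (w * w)) * (z * v)) =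
          ((x * u) * (y * u)) * ((w * z) * ((w * w) * v)) := by
  rw [hQ.trimedial_identity_iff]
  constructor
  · intro h
    exact ⟨h.medialAt_right, h.medialAt_kepka⟩
  · rintro ⟨right, kepka⟩
    have left := hQ.medialAt_self_self kepka right
    exact IsKepkaQuasigroup.isTrimedial ⟨hQ, left, right, kepka⟩
end
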